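/- Two CAT(0) spaces glued along isometric closed convex subsets (in particular, two flat Euclidean sectors glued along a common boundary ray) form a CAT(0) space; consequently, in the glued space the CN inequality d(x, m)² ≤ (1/2)d(x,y)² + (1/2)d(x,z)² − (1/4)d(y,z)² holds for midpoints m of y, z. -/

import Mathlib

/-!
The CN inequality along a geodesic is equivalent to Stewart's theorem holding as an inequality at
every point of the geodesic, a condition involving nothing but distances. In that form there are
three ways of assembling triangles. If `a` lies between `y` and `z`, subdividing the triangle
`x, y, z` at `a` and letting a point of `[a, x]` tend to `a` gives Stewart's inequality at `a`. If
`a` lies between `x` and `m`, the segment from `x` to a point of `[b, m]` is compared with a broken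
path through `[b, a]`, which transfers the inequality across the common side `[b, a]`. Finally,
Stewart's inequality at two consecutive points of a segment can be chained. Since a segment joining
the two pieces crosses their intersection, these suffice for triangles with vertices anywhere.
-/

open Set Metric Filter

variable {M : Type*}

def IsGeodesic [MetricSpace M] (γ : ℝ → M) : Prop :=
  ∀ s ∈ Set.Icc (0:ℝ) 1, ∀ t ∈ Set.Icc (0:ℝ) 1,
    dist (γ s) (γ t) = |s - t| * dist (γ 0) (γ 1)

def GeodesicSpace (M : Type*) [MetricSpace M] : Prop :=
  ∀ x y : M, ∃ γ : ℝ → M, IsGeodesic γ ∧ γ 0 = x ∧ γ 1 = y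

def Perp [MetricSpace M] (γ η : ℝ → M) : Prop :=
  ∀ t ∈ Set.Icc (0:ℝ) 1, ∀ s ∈ Set.Icc (0:ℝ) 1,
    dist (γ 0) (γ t) ≤ dist (η s) (γ t)

def SO (M : Type*) [MetricSpace M] : Prop :=
  ∀ γ η : ℝ → M, IsGeodesic γ → IsGeodesic η → γ 0 = η 0 → Perp γ η → Perp η γ

def WeaklyConvex [MetricSpace M] (C : Set M) : Prop :=
  ∀ x ∈ C, ∀ y ∈ C, ∃ γ : ℝ → M, IsGeodesic γ ∧ γ 0 = x ∧ γ 1 = y ∧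
    ∀ t ∈ Set.Icc (0:ℝ) 1, γ t ∈ C

def GeoConvex [MetricSpace M] (C : Set M) : Prop :=
  ∀ γ : ℝ → M, IsGeodesic γ → γ 0 ∈ C → γ 1 ∈ C → ∀ t ∈ Set.Icc (0:ℝ) 1, γ t ∈ C

def NearestPt [MetricSpace M] (C : Set M) (x y : M) : Prop :=
  y ∈ C ∧ dist x y = Metric.infDist x C

def NE (M : Type*) [MetricSpace M] : Prop :=
  ∀ C : Set M, IsClosed C → WeaklyConvex C → ∀ x y xC yC : M,
    NearestPt C x xC → NearestPt C y yC → dist xC yC ≤ dist x y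

def BusemannConvex (M : Type*) [MetricSpace M] : Prop :=
  ∀ γ η : ℝ → M, IsGeodesic γ → IsGeodesic η →
    ConvexOn ℝ (Set.Icc (0:ℝ) 1) (fun t => dist (γ t) (η t))
/-- CN inequality restricted to a subset. -/
def CNOn [MetricSpace M] (X : Set M) : Prop :=
  ∀ x ∈ X, ∀ y ∈ X, ∀ z ∈ X, ∀ m ∈ X,
    dist y m = dist y z / 2 → dist z m = dist y z / 2 →
    dist x m ^ 2 ≤ (1/2) * dist x y ^ 2 + (1/2) * dist x z ^ 2 - (1/4) * dist y z ^ 2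

section Stewart

variable [PseudoMetricSpace M] {x y z a m : M}

/-- `m` lies metrically between `y` and `z`, i.e. the triangle inequality through `m` is an
equality. In a geodesic space these are the points of the geodesics from `y` to `z`. -/
def MetricBetween (y m z : M) : Prop :=
  dist y m + dist m z = dist y z

/-- The comparison inequality for the distance from `x` to the point `m` of a segment `[y, z]`, in
the form of Stewart's theorem, which is the case of equality in the Euclidean plane. It is
stated without dividing by `dist y z`, so it is trivially true when `dist y z = 0`. -/
def StewartAt (x y z m : M) : Prop :=
  dist y z * (dist x m ^ 2 + dist y m * dist m z) ≤
    dist m z * dist x y ^ 2 + dist y m * dist x z ^ 2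

/-- The CAT(0) comparison of the triangle `x, y, z` from the vertex `x` to the opposite side. -/
def StewartOn (x y z : M) : Prop :=
  ∀ m, MetricBetween y m z → StewartAt x y z m

theorem MetricBetween.symm (h : MetricBetween y m z) : MetricBetween z m y := by
  rw [MetricBetween, dist_comm z m, dist_comm m y, dist_comm z y, add_comm]
  exact h

theorem MetricBetween.trans_right_left (hm : MetricBetween y m z) (ha : MetricBetween m a z) :
    MetricBetween y m a := by
  unfold MetricBetween at *
  linarith [dist_triangle y m a, dist_triangle y a z]

theorem StewartAt.symm (h : StewartAt x y z m) : StewartAt x z y m := by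
  unfold StewartAt at *
  rw [dist_comm z y, dist_comm z m, dist_comm m y]
  linarith

theorem StewartOn.symm (h : StewartOn x y z) : StewartOn x z y :=
  fun m hm => (h m hm.symm).symm

theorem MetricBetween.mul_mul_dist_le (h : MetricBetween y a z) (c : M) :
    dist y a * dist a z * dist y z ≤ dist a z * dist y c ^ 2 + dist y a * dist z c ^ 2 := by
  have htri : dist y a + dist a z ≤ dist y c + dist z c := by
    rw [h, dist_comm z c]
    exact dist_triangle y c z
  have hprod := mul_le_mul_of_nonneg_left htri
    (mul_nonneg (dist_nonneg (x := y) (y := a)) (dist_nonneg (x := a) (y := z)))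
  have hy := mul_nonneg (dist_nonneg (x := a) (y := z)) (sq_nonneg (dist y c - dist y a))
  have hz := mul_nonneg (dist_nonneg (x := y) (y := a)) (sq_nonneg (dist z c - dist a z))
  rw [← h]
  linarith

theorem mul_mul_dist_sq_le {p q : ℝ} (hp : 0 ≤ p) (hq : 0 ≤ q) (x e c : M) :
    p * q * dist x c ^ 2 ≤ (p + q) * (q * dist x e ^ 2 + p * dist c e ^ 2) :=
  calc
    p * q * dist x c ^ 2 ≤ p * q * (dist x e + dist c e) ^ 2 := by
      gcongr
      exact dist_triangle_right x c e
    _ ≤ (p + q) * (q * dist x e ^ 2 + p * dist c e ^ 2) := by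
      linarith [sq_nonneg (q * dist x e - p * dist c e)]

theorem StewartAt.of_subsegments (hm : MetricBetween y m z) (ha : MetricBetween m a z)
    (hpos : 0 < dist m a) (hy : StewartAt x y a m) (hz : StewartAt x m z a) :
    StewartAt x y z m := by
  have hya : dist y a = dist y m + dist m a := Eq.symm (hm.trans_right_left ha)
  have hyz : dist y z = dist y m + (dist m a + dist a z) := by rw [ha, hm]
  have hmz : dist m z = dist m a + dist a z := Eq.symm ha
  unfold StewartAt at *
  rw [hya] at hy
  rw [hmz] at hz
  rw [hyz, hmz]
  have hy' := mul_le_mul_of_nonneg_left hy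
    (add_nonneg (dist_nonneg (x := m) (y := a)) (dist_nonneg (x := a) (y := z)))
  have hz' := mul_le_mul_of_nonneg_left hz (dist_nonneg (x := y) (y := m))
  refine le_of_mul_le_mul_left ?_ hpos
  linarith

end Stewart

section ConcatPath

variable {α β : ℝ → M} {s t : ℝ}

/-- The concatenation of two paths parametrized by `[0, 1]`, the first one being traversed
during `[0, t]` and the second one during `[t, 1]`. -/
noncomputable def concatPath (t : ℝ) (α β : ℝ → M) (s : ℝ) : M :=
  if s ≤ t then α (s / t) else β ((s - t) / (1 - t))

theorem concatPath_of_le (hs : s ≤ t) :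
    concatPath t α β s = α (s / t) :=
  if_pos hs

theorem concatPath_of_ge (ht : t ≠ 0) (hαβ : α 1 = β 0) (hs : t ≤ s) :
    concatPath t α β s = β ((s - t) / (1 - t)) := by
  rcases hs.eq_or_lt with rfl | hs
  · rw [concatPath_of_le le_rfl, div_self ht, sub_self, zero_div, hαβ]
  · exact if_neg hs.not_ge

end ConcatPath

section Geodesic

variable [MetricSpace M] {x y z a m : M} {α β γ : ℝ → M} {s r t : ℝ}

theorem IsGeodesic.dist_zero_left (hγ : IsGeodesic γ) (ht : t ∈ Icc (0 : ℝ) 1) :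
    dist (γ 0) (γ t) = t * dist (γ 0) (γ 1) := by
  rw [hγ 0 (left_mem_Icc.2 zero_le_one) t ht, zero_sub, abs_neg, abs_of_nonneg ht.1]

theorem IsGeodesic.dist_one_right (hγ : IsGeodesic γ) (ht : t ∈ Icc (0 : ℝ) 1) :
    dist (γ t) (γ 1) = (1 - t) * dist (γ 0) (γ 1) := by
  rw [hγ t ht 1 (right_mem_Icc.2 zero_le_one), abs_sub_comm, abs_of_nonneg (sub_nonneg.2 ht.2)]

theorem IsGeodesic.metricBetween (hγ : IsGeodesic γ) (ht : t ∈ Icc (0 : ℝ) 1) :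
    MetricBetween (γ 0) (γ t) (γ 1) := by
  rw [MetricBetween, hγ.dist_zero_left ht, hγ.dist_one_right ht]
  ring

theorem IsGeodesic.continuousOn (hγ : IsGeodesic γ) : ContinuousOn γ (Icc 0 1) := by
  refine (LipschitzOnWith.of_dist_le_mul (K := nndist (γ 0) (γ 1)) fun s hs t ht => ?_).continuousOn
  rw [hγ s hs t ht, coe_nndist, Real.dist_eq, mul_comm]

theorem isGeodesic_of_dist_le
    (h : ∀ ⦃s t⦄, 0 ≤ s → s ≤ t → t ≤ 1 → dist (γ s) (γ t) ≤ (t - s) * dist (γ 0) (γ 1)) :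
    IsGeodesic γ := by
  have heq : ∀ ⦃s t⦄, 0 ≤ s → s ≤ t → t ≤ 1 →
      dist (γ s) (γ t) = (t - s) * dist (γ 0) (γ 1) := fun s t hs hst ht => by
    have hleft := h le_rfl hs (hst.trans ht)
    have hright := h (hs.trans hst) ht le_rfl
    linarith [h hs hst ht, dist_triangle4 (γ 0) (γ s) (γ t) (γ 1)]
  intro s hs t ht
  rcases le_total s t with hst | hts
  · rw [heq hs.1 hst ht.2, abs_sub_comm, abs_of_nonneg (sub_nonneg.2 hst)]
  · rw [dist_comm, heq ht.1 hts hs.2, abs_of_nonneg (sub_nonneg.2 hts)]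

theorem IsGeodesic.dist_concatPath_of_le (hα : IsGeodesic α) (β : ℝ → M) (ht : 0 < t)
    (hs : 0 ≤ s) (hsr : s ≤ r) (hr : r ≤ t) :
    dist (concatPath t α β s) (concatPath t α β r) = (r - s) / t * dist (α 0) (α 1) := by
  have hmem : ∀ {w}, 0 ≤ w → w ≤ t → w / t ∈ Icc (0 : ℝ) 1 := fun h h' =>
    ⟨div_nonneg h ht.le, (div_le_one ht).2 h'⟩
  rw [concatPath_of_le (hsr.trans hr), concatPath_of_le hr,
    hα _ (hmem hs (hsr.trans hr)) _ (hmem (hs.trans hsr) hr), ← sub_div, abs_div, abs_of_pos ht,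
    abs_sub_comm, abs_of_nonneg (sub_nonneg.2 hsr)]

theorem IsGeodesic.dist_concatPath_of_ge (hβ : IsGeodesic β) (hαβ : α 1 = β 0)
    (ht : t ∈ Ioo (0 : ℝ) 1) (hs : t ≤ s) (hsr : s ≤ r) (hr : r ≤ 1) :
    dist (concatPath t α β s) (concatPath t α β r) = (r - s) / (1 - t) * dist (β 0) (β 1) := by
  have ht' : 0 < 1 - t := sub_pos.2 ht.2
  have hmem : ∀ {w}, t ≤ w → w ≤ 1 → (w - t) / (1 - t) ∈ Icc (0 : ℝ) 1 := fun h h' =>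
    ⟨div_nonneg (sub_nonneg.2 h) ht'.le, (div_le_one ht').2 (sub_le_sub_right h' t)⟩
  rw [concatPath_of_ge ht.1.ne' hαβ hs, concatPath_of_ge ht.1.ne' hαβ (hs.trans hsr),
    hβ _ (hmem hs (hsr.trans hr)) _ (hmem (hs.trans hsr) hr), ← sub_div, abs_div, abs_of_pos ht',
    abs_sub_comm, sub_sub_sub_cancel_right, abs_of_nonneg (sub_nonneg.2 hsr)]

theorem IsGeodesic.isGeodesic_concatPath (hα : IsGeodesic α) (hβ : IsGeodesic β)
    (hαβ : α 1 = β 0) (ht : t ∈ Ioo (0 : ℝ) 1)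
    (hdα : dist (α 0) (α 1) = t * dist (α 0) (β 1))
    (hdβ : dist (β 0) (β 1) = (1 - t) * dist (α 0) (β 1)) :
    IsGeodesic (concatPath t α β) := by
  have ht0 : t ≠ 0 := ht.1.ne'
  have ht1 : 1 - t ≠ 0 := (sub_pos.2 ht.2).ne'
  have hzero : concatPath t α β 0 = α 0 := by rw [concatPath_of_le ht.1.le, zero_div]
  have hone : concatPath t α β 1 = β 1 := by
    rw [concatPath_of_ge ht0 hαβ ht.2.le, div_self ht1]
  have hleft : ∀ {s r}, 0 ≤ s → s ≤ r → r ≤ t →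
      dist (concatPath t α β s) (concatPath t α β r) = (r - s) * dist (α 0) (β 1) := by
    intro s r hs hsr hr
    rw [hα.dist_concatPath_of_le β ht.1 hs hsr hr, hdα, ← mul_assoc, div_mul_cancel₀ _ ht0]
  have hright : ∀ {s r}, t ≤ s → s ≤ r → r ≤ 1 →
      dist (concatPath t α β s) (concatPath t α β r) = (r - s) * dist (α 0) (β 1) := by
    intro s r hs hsr hr
    rw [hβ.dist_concatPath_of_ge hαβ ht hs hsr hr, hdβ, ← mul_assoc, div_mul_cancel₀ _ ht1]
  refine isGeodesic_of_dist_le fun s r hs hsr hr => ?_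
  rw [hzero, hone]
  rcases le_total r t with hrt | htr
  · exact (hleft hs hsr hrt).le
  rcases le_total t s with hts | hst
  · exact (hright hts hsr hr).le
  · linarith [hleft hs hst le_rfl, hright le_rfl htr hr,
      dist_triangle (concatPath t α β s) (concatPath t α β t) (concatPath t α β r)]

theorem GeodesicSpace.exists_isGeodesic_of_metricBetween (hgeo : GeodesicSpace M)
    (h : MetricBetween y m z) :
    ∃ γ : ℝ → M, IsGeodesic γ ∧ γ 0 = y ∧ γ 1 = z ∧ ∃ t ∈ Icc (0 : ℝ) 1, γ t = m := by
  rcases eq_or_ne y m with rfl | hym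
  · obtain ⟨γ, hγ, h0, h1⟩ := hgeo y z
    exact ⟨γ, hγ, h0, h1, 0, left_mem_Icc.2 zero_le_one, h0⟩
  rcases eq_or_ne m z with rfl | hmz
  · obtain ⟨γ, hγ, h0, h1⟩ := hgeo y m
    exact ⟨γ, hγ, h0, h1, 1, right_mem_Icc.2 zero_le_one, h1⟩
  obtain ⟨α, hα, rfl, rfl⟩ := hgeo y m
  obtain ⟨β, hβ, hβ0, rfl⟩ := hgeo (α 1) z
  have hpos := dist_pos.2 hym
  have hpos' := dist_pos.2 hmz
  have hD : 0 < dist (α 0) (β 1) := h ▸ add_pos hpos hpos'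
  set t := dist (α 0) (α 1) / dist (α 0) (β 1)
  have ht : t * dist (α 0) (β 1) = dist (α 0) (α 1) := div_mul_cancel₀ _ hD.ne'
  have ht0 : 0 < t := div_pos hpos hD
  have ht1 : t < 1 := (div_lt_one hD).2 (h ▸ lt_add_of_pos_right _ hpos')
  refine ⟨concatPath t α β, hα.isGeodesic_concatPath hβ hβ0.symm ⟨ht0, ht1⟩ ht.symm ?_, ?_, ?_,
    t, ⟨ht0.le, ht1.le⟩, ?_⟩
  · rw [hβ0, sub_mul, one_mul, ht, ← h, add_sub_cancel_left]
  · rw [concatPath_of_le ht0.le, zero_div]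
  · rw [concatPath_of_ge ht0.ne' hβ0.symm ht1.le, div_self (sub_pos.2 ht1).ne']
  · rw [concatPath_of_le le_rfl, div_self ht0.ne']

theorem GeodesicSpace.exists_metricBetween_mem_inter (hgeo : GeodesicSpace M) {X₁ X₂ : Set M}
    (hcover : X₁ ∪ X₂ = univ) (hc₁ : IsClosed X₁) (hc₂ : IsClosed X₂) (hy : y ∈ X₁)
    (hz : z ∈ X₂) : ∃ a ∈ X₁ ∩ X₂, MetricBetween y a z := by
  obtain ⟨γ, hγ, rfl, rfl⟩ := hgeo y z
  have hconn : IsPreconnected (γ '' Icc 0 1) := isPreconnected_Icc.image γ hγ.continuousOn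
  obtain ⟨_, ⟨t, ht, rfl⟩, ha⟩ := isPreconnected_closed_iff.1 hconn X₁ X₂ hc₁ hc₂
    (hcover ▸ subset_univ _)
    ⟨γ 0, mem_image_of_mem γ (left_mem_Icc.2 zero_le_one), hy⟩
    ⟨γ 1, mem_image_of_mem γ (right_mem_Icc.2 zero_le_one), hz⟩
  exact ⟨γ t, ha, hγ.metricBetween ht⟩

theorem GeoConvex.mem_of_metricBetween (hgeo : GeodesicSpace M) {C : Set M} (hC : GeoConvex C)
    (hy : y ∈ C) (hz : z ∈ C) (h : MetricBetween y m z) : m ∈ C := by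
  obtain ⟨γ, hγ, rfl, rfl, t, ht, rfl⟩ := hgeo.exists_isGeodesic_of_metricBetween h
  exact hC γ hγ hy hz t ht

theorem IsGeodesic.stewartAt_iff (hγ : IsGeodesic γ) (ht : t ∈ Icc (0 : ℝ) 1) :
    StewartAt x (γ 0) (γ 1) (γ t) ↔
      dist x (γ t) ^ 2 ≤ (1 - t) * dist x (γ 0) ^ 2 + t * dist x (γ 1) ^ 2
        - t * (1 - t) * dist (γ 0) (γ 1) ^ 2 := by
  have hzero := hγ.dist_zero_left ht
  rw [StewartAt, hzero, hγ.dist_one_right ht]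
  rcases eq_or_ne (γ 0) (γ 1) with h | h
  · have ht0 : γ 0 = γ t := dist_eq_zero.1 (by rw [hzero, h, dist_self, mul_zero])
    rw [← h, ← ht0, dist_self]
    exact iff_of_true (by simp) (by linarith)
  · rw [← mul_le_mul_iff_right₀ (b := dist x (γ t) ^ 2) (dist_pos.2 h)]
    constructor <;> intro hle <;> linarith

theorem GeodesicSpace.exists_weighted_barycenter (hgeo : GeodesicSpace M) (y z : M) {p q : ℝ}
    (hp : 0 ≤ p) (hq : 0 ≤ q) (hpq : 0 < p + q) :
    ∃ e, ∀ x, StewartOn x y z → (p + q) * dist x e ^ 2 ≤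
      p * dist x y ^ 2 + q * dist x z ^ 2 - p * q / (p + q) * dist y z ^ 2 := by
  obtain ⟨γ, hγ, rfl, rfl⟩ := hgeo y z
  have ht : q / (p + q) ∈ Icc (0 : ℝ) 1 :=
    ⟨div_nonneg hq hpq.le, (div_le_one hpq).2 (le_add_of_nonneg_left hp)⟩
  refine ⟨γ (q / (p + q)), fun x hx => ?_⟩
  have hle := (hγ.stewartAt_iff ht).1 (hx _ (hγ.metricBetween ht))
  refine (mul_le_mul_of_nonneg_left hle hpq.le).trans_eq ?_
  field_simp
  ring

end Geodesic

section ComparisonOfTriangles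

variable [MetricSpace M] {x y z a b c m : M}

theorem stewartAt_of_stewartOn (hgeo : GeodesicSpace M) (ha : MetricBetween y a z)
    (hy : StewartOn y a x) (hz : StewartOn z a x) : StewartAt x y z a := by
  unfold StewartAt
  rw [dist_comm x y, dist_comm x z, dist_comm x a]
  let f : ℝ → ℝ := fun s => dist y z * (dist a x ^ 2 / (1 + s) + dist y a * dist a z)
  have hle : ∀ s > 0, f s ≤ dist a z * dist y x ^ 2 + dist y a * dist z x ^ 2 := by
    intro s hs
    have hs' : 0 < 1 + s := by positivity
    obtain ⟨c, hc⟩ := hgeo.exists_weighted_barycenter a x zero_le_one hs.le hs'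
    have hyc := mul_le_mul_of_nonneg_left (hc y hy) (dist_nonneg (x := a) (y := z))
    have hzc := mul_le_mul_of_nonneg_left (hc z hz) (dist_nonneg (x := y) (y := a))
    have hyz := mul_le_mul_of_nonneg_left (ha.mul_mul_dist_le c) hs'.le
    rw [dist_comm z a] at hzc
    have hdiv : 1 * s / (1 + s) * dist a x ^ 2 = s * (dist a x ^ 2 / (1 + s)) := by ring
    rw [hdiv] at hyc hzc
    simp only [f]
    rw [← ha] at hyz ⊢
    refine le_of_mul_le_mul_left ?_ hs
    linarith
  have hcont : ContinuousAt f 0 := by fun_prop (disch := norm_num)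
  have hlim := le_of_tendsto (hcont.tendsto.mono_left (nhdsWithin_le_nhds (s := Ioi 0)))
    (eventually_mem_nhdsWithin.mono hle)
  rwa [show f 0 = dist y z * (dist a x ^ 2 + dist y a * dist a z) by simp [f]] at hlim

theorem stewartAt_of_glue (hgeo : GeodesicSpace M) (hxa : x ≠ a) (ham : a ≠ m) (hbc : b ≠ c)
    (ha : MetricBetween x a m) (hc : MetricBetween b c m) (hxba : StewartOn x b a)
    (hcba : StewartOn c b a) (hac : StewartAt a b m c) : StewartAt x b m c := by
  unfold StewartAt at hac ⊢
  rw [← hc, dist_comm a b] at hac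
  rw [← ha, ← hc]
  have hα := dist_pos.2 hxa
  have hβ := dist_pos.2 ham
  have hk := dist_pos.2 hbc
  have hl := dist_nonneg (x := c) (y := m)
  set α := dist x a
  set β := dist a m
  set k := dist b c
  set l := dist c m
  have hp : 0 ≤ α * (k + l) := by positivity
  have hq : 0 ≤ k * β := by positivity
  -- By Menelaus, these are the weights of the point where `[x, c]` meets `[b, a]` in the plane.
  have hw : 0 < α * l + k * (α + β) := by positivity
  obtain ⟨e, he⟩ := hgeo.exists_weighted_barycenter b a (by positivity) (by positivity) hw
  have hxe := mul_le_mul_of_nonneg_left (he x hxba) hq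
  have hce := mul_le_mul_of_nonneg_left (he c hcba) hp
  have hxc := mul_mul_dist_sq_le hp hq x e c
  rw [dist_comm c b, dist_comm c a] at hce
  have hac' := mul_le_mul_of_nonneg_left hac (show 0 ≤ k * α * (α + β) by positivity)
  -- The defects in `hxe` and `hce` add up to the `dist b a` term of `hac'`.
  have hdefect : (α * (k + l) + k * β) * (α * l * (k * (α + β)) / (α * l + k * (α + β)) *
      dist b a ^ 2) = α * l * (k * (α + β)) * dist b a ^ 2 := by
    field_simp
    ring
  refine le_of_mul_le_mul_left ?_ (show 0 < α * k * β by positivity)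
  linarith

theorem stewartOn_of_glue (hgeo : GeodesicSpace M) (ha : MetricBetween x a m)
    (hx : StewartOn x b a) (hm : StewartOn a b m)
    (hside : ∀ c, MetricBetween b c m → StewartOn c b a) : StewartOn x b m := by
  intro c hc
  rcases eq_or_ne x a with rfl | hxa
  · exact hm c hc
  rcases eq_or_ne a m with rfl | ham
  · exact hx c hc
  rcases eq_or_ne b c with rfl | hbc
  · simp [StewartAt]
  exact stewartAt_of_glue hgeo hxa ham hbc ha hc hx (hside c hc) (hm c hc)

end ComparisonOfTriangles

theorem nonpos_of_midpoint_le {a b : ℝ} {g : ℝ → ℝ} (hg : ContinuousOn g (Icc a b))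
    (ha : g a ≤ 0) (hb : g b ≤ 0)
    (hmid : ∀ s ∈ Icc a b, ∀ t ∈ Icc a b, g ((s + t) / 2) ≤ (g s + g t) / 2)
    {t : ℝ} (ht : t ∈ Icc a b) : g t ≤ 0 := by
  obtain ⟨τ, hτ, hmax⟩ := isCompact_Icc.exists_isMaxOn ⟨t, ht⟩ hg
  have hab : a ≤ b := ht.1.trans ht.2
  refine (hmax ht).trans ?_
  -- A maximum point is the midpoint of an endpoint and its reflection in the maximum point.
  rcases le_total (2 * τ) (a + b) with h | h
  · have hmem : 2 * τ - a ∈ Icc a b := ⟨by linarith [hτ.1], by linarith⟩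
    have hle := hmid a (left_mem_Icc.2 hab) _ hmem
    rw [add_sub_cancel, mul_div_cancel_left₀ τ two_ne_zero] at hle
    linarith [isMaxOn_iff.1 hmax _ hmem]
  · have hmem : 2 * τ - b ∈ Icc a b := ⟨by linarith, by linarith [hτ.2]⟩
    have hle := hmid b (right_mem_Icc.2 hab) _ hmem
    rw [add_sub_cancel, mul_div_cancel_left₀ τ two_ne_zero] at hle
    linarith [isMaxOn_iff.1 hmax _ hmem]

section CAT0

variable [MetricSpace M] {C X₁ X₂ : Set M} {x y z a m : M}

/-- A subset that is convex, in the sense that it contains every point metrically between two of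
its points, and in which all triangles satisfy the CAT(0) comparison. -/
structure IsCAT0 (C : Set M) : Prop where
  mem_of_metricBetween ⦃y z m : M⦄ : y ∈ C → z ∈ C → MetricBetween y m z → m ∈ C
  stewartOn ⦃x y z : M⦄ : x ∈ C → y ∈ C → z ∈ C → StewartOn x y z

theorem CNOn.stewartOn (hgeo : GeodesicSpace M) (hC : GeoConvex C) (hCN : CNOn C)
    (hx : x ∈ C) (hy : y ∈ C) (hz : z ∈ C) : StewartOn x y z := by
  intro m hm
  obtain ⟨γ, hγ, rfl, rfl, t, ht, rfl⟩ := hgeo.exists_isGeodesic_of_metricBetween hm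
  have hmem : ∀ s ∈ Icc (0 : ℝ) 1, γ s ∈ C := hC γ hγ hy hz
  let g : ℝ → ℝ := fun s => dist x (γ s) ^ 2 - ((1 - s) * dist x (γ 0) ^ 2
    + s * dist x (γ 1) ^ 2 - s * (1 - s) * dist (γ 0) (γ 1) ^ 2)
  have hcont : ContinuousOn g (Icc 0 1) := by
    have := hγ.continuousOn
    fun_prop
  have hmid : ∀ s ∈ Icc (0 : ℝ) 1, ∀ r ∈ Icc (0 : ℝ) 1,
      g ((s + r) / 2) ≤ (g s + g r) / 2 := by
    intro s hs r hr
    have hsr : (s + r) / 2 ∈ Icc (0 : ℝ) 1 :=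
      ⟨by linarith [hs.1, hr.1], by linarith [hs.2, hr.2]⟩
    have hCNsr := hCN x hx _ (hmem s hs) _ (hmem r hr) _ (hmem _ hsr)
      (by rw [hγ s hs _ hsr, hγ s hs r hr, show s - (s + r) / 2 = (s - r) / 2 by ring, abs_div,
        abs_two]; ring)
      (by rw [hγ r hr _ hsr, hγ s hs r hr, show r - (s + r) / 2 = -((s - r) / 2) by ring, abs_neg,
        abs_div, abs_two]; ring)
    rw [hγ s hs r hr, mul_pow, sq_abs] at hCNsr
    simp only [g]
    linarith
  rw [hγ.stewartAt_iff ht, ← sub_nonpos]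
  exact nonpos_of_midpoint_le hcont (by simp [g]) (by simp [g]) hmid ht

theorem CNOn.isCAT0 (hgeo : GeodesicSpace M) (hC : GeoConvex C) (hCN : CNOn C) : IsCAT0 C where
  mem_of_metricBetween _ _ _ hy hz := hC.mem_of_metricBetween hgeo hy hz
  stewartOn _ _ _ hx hy hz := hCN.stewartOn hgeo hC hx hy hz

theorem IsCAT0.cnOn (hC : IsCAT0 C) : CNOn C := by
  intro x hx y hy z hz m _ hym hzm
  rcases eq_or_ne y z with rfl | hyz
  · obtain rfl : y = m := dist_eq_zero.1 (by rw [hym, dist_self, zero_div])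
    rw [dist_self]
    linarith
  · rw [dist_comm] at hzm
    have hm := hC.stewartOn hx hy hz m (by rw [MetricBetween, hym, hzm, add_halves])
    rw [StewartAt, hym, hzm] at hm
    refine le_of_mul_le_mul_left ?_ (dist_pos.2 hyz)
    linarith

/-- A geodesic space covered by two CAT(0) convex subsets `X₁` and `X₂`, glued along `X₁ ∩ X₂` in
the sense that any two points of different pieces are joined through a point of `X₁ ∩ X₂`. -/
structure CAT0Gluing (X₁ X₂ : Set M) : Prop where
  geodesicSpace : GeodesicSpace M
  union_eq_univ : X₁ ∪ X₂ = univ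
  left : IsCAT0 X₁
  right : IsCAT0 X₂
  exists_metricBetween ⦃y z : M⦄ : y ∈ X₁ → z ∈ X₂ → ∃ a ∈ X₁ ∩ X₂, MetricBetween y a z

namespace CAT0Gluing

theorem symm (h : CAT0Gluing X₁ X₂) : CAT0Gluing X₂ X₁ where
  geodesicSpace := h.geodesicSpace
  union_eq_univ := by rw [union_comm, h.union_eq_univ]
  left := h.right
  right := h.left
  exists_metricBetween _ _ hy hz :=
    let ⟨a, ha, hb⟩ := h.exists_metricBetween hz hy
    ⟨a, ha.symm, hb.symm⟩

theorem mem_or_mem (h : CAT0Gluing X₁ X₂) (x : M) : x ∈ X₁ ∨ x ∈ X₂ :=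
  (mem_union x X₁ X₂).1 (h.union_eq_univ ▸ mem_univ x)

theorem stewartOn_of_mem_inter (h : CAT0Gluing X₁ X₂) (hx : x ∈ X₂) (hy : y ∈ X₁ ∩ X₂)
    (hz : z ∈ X₁) : StewartOn x y z := by
  obtain ⟨a, ha, hzax⟩ := h.exists_metricBetween hz hx
  exact stewartOn_of_glue h.geodesicSpace hzax.symm (h.right.stewartOn hx hy.2 ha.2)
    (h.left.stewartOn ha.1 hy.1 hz) fun c hc =>
      h.left.stewartOn (h.left.mem_of_metricBetween hy.1 hz hc) hy.1 ha.1

theorem stewartAt_of_mem_inter (h : CAT0Gluing X₁ X₂) (hx : x ∈ X₁) (hy : y ∈ X₁) (hz : z ∈ X₂)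
    (ha : a ∈ X₁ ∩ X₂) (hyaz : MetricBetween y a z) : StewartAt x y z a :=
  stewartAt_of_stewartOn h.geodesicSpace hyaz (h.left.stewartOn hy ha.1 hx)
    (h.stewartOn_of_mem_inter hz ha hx)

theorem stewartOn_of_mem_left_left_right (h : CAT0Gluing X₁ X₂) (hx : x ∈ X₁) (hy : y ∈ X₁)
    (hz : z ∈ X₂) : StewartOn x y z := by
  intro m hm
  rcases h.mem_or_mem m with hm₁ | hm₂
  · obtain ⟨a, ha, hmaz⟩ := h.exists_metricBetween hm₁ hz
    rcases eq_or_ne m a with rfl | hma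
    · exact h.stewartAt_of_mem_inter hx hy hz ha hm
    · exact .of_subsegments hm hmaz (dist_pos.2 hma)
        (h.left.stewartOn hx hy ha.1 m (hm.trans_right_left hmaz))
        (h.stewartAt_of_mem_inter hx hm₁ hz ha hmaz)
  · obtain ⟨a, ha, hyam⟩ := h.exists_metricBetween hy hm₂
    rcases eq_or_ne m a with rfl | hma
    · exact h.stewartAt_of_mem_inter hx hy hz ha hm
    · exact .symm <| .of_subsegments hm.symm hyam.symm (dist_pos.2 hma)
        ((h.symm.stewartOn_of_mem_inter hx ha.symm hz).symm m
          (hm.symm.trans_right_left hyam.symm))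
        (h.stewartAt_of_mem_inter hx hy hm₂ ha hyam).symm

theorem stewartOn_of_mem_left_left (h : CAT0Gluing X₁ X₂) (hy : y ∈ X₁) (hz : z ∈ X₁) :
    StewartOn x y z := by
  rcases h.mem_or_mem x with hx | hx
  · exact h.left.stewartOn hx hy hz
  · intro m hm
    have hm₁ := h.left.mem_of_metricBetween hy hz hm
    exact stewartAt_of_stewartOn h.geodesicSpace hm
      (h.stewartOn_of_mem_left_left_right hy hm₁ hx)
      (h.stewartOn_of_mem_left_left_right hz hm₁ hx)

theorem stewartOn_of_mem_left_right (h : CAT0Gluing X₁ X₂) (hy : y ∈ X₁) (hz : z ∈ X₂) :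
    StewartOn x y z := by
  rcases h.mem_or_mem x with hx | hx
  · exact h.stewartOn_of_mem_left_left_right hx hy hz
  · exact (h.symm.stewartOn_of_mem_left_left_right hx hz hy).symm

theorem isCAT0_univ (h : CAT0Gluing X₁ X₂) : IsCAT0 (univ : Set M) where
  mem_of_metricBetween _ _ _ _ _ _ := mem_univ _
  stewartOn x y z _ _ _ := by
    rcases h.mem_or_mem y with hy | hy <;> rcases h.mem_or_mem z with hz | hz
    · exact h.stewartOn_of_mem_left_left hy hz
    · exact h.stewartOn_of_mem_left_right hy hz
    · exact h.symm.stewartOn_of_mem_left_right hy hz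
    · exact h.symm.stewartOn_of_mem_left_left hy hz

end CAT0Gluing

end CAT0

/-- Reshetnyak gluing: a geodesic space covered by two closed convex CAT(0)
pieces glued along their (nonempty, closed, convex) intersection, with the
glued distance realized through the intersection, satisfies the CN inequality
globally; in particular it is CAT(0). -/
theorem stmt13 {Z : Type*} [MetricSpace Z] (hgeo : GeodesicSpace Z)
    (X₁ X₂ : Set Z) (hcover : X₁ ∪ X₂ = Set.univ)
    (hc₁ : IsClosed X₁) (hc₂ : IsClosed X₂)
    (hv₁ : GeoConvex X₁) (hv₂ : GeoConvex X₂)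
    (hA : (X₁ ∩ X₂).Nonempty) (hAc : IsClosed (X₁ ∩ X₂)) (hAv : GeoConvex (X₁ ∩ X₂))
    (hCN₁ : CNOn X₁) (hCN₂ : CNOn X₂)
    (hglue : ∀ x ∈ X₁, ∀ y ∈ X₂,
      dist x y = sInf ((fun a => dist x a + dist a y) '' (X₁ ∩ X₂))) :
    ∀ x y z m : Z, dist y m = dist y z / 2 → dist z m = dist y z / 2 →
      dist x m ^ 2 ≤ (1/2) * dist x y ^ 2 + (1/2) * dist x z ^ 2
        - (1/4) * dist y z ^ 2 := by
  have hglued : CAT0Gluing X₁ X₂ :=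
    { geodesicSpace := hgeo
      union_eq_univ := hcover
      left := hCN₁.isCAT0 hgeo hv₁
      right := hCN₂.isCAT0 hgeo hv₂
      exists_metricBetween := fun _ _ hy hz =>
        hgeo.exists_metricBetween_mem_inter hcover hc₁ hc₂ hy hz }
  intro x y z m
  exact hglued.isCAT0_univ.cnOn x (mem_univ x) y (mem_univ y) z (mem_univ z) m (mem_univ m)
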